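/- For every finite simple graph G with vertex set {v_1, …, v_n} and maximum degree at most 3, there exist sets f_1, …, f_n ⊆ ℝ³, where each f_i is the convex hull of a set of at most three points (a possibly degenerate triangle), such that for all i ≠ j: f_i ∩ f_j ≠ ∅ if and only if v_i v_j is an edge of G; moreover, for all i ≠ j, the intersection f_i ∩ f_j is contained in the set of common defining vertices of the two triangles (any two triangles are disjoint except possibly at shared corner points). -/

import Mathlib

/-!
Each edge is a label, and the triangle of a vertex is spanned by the points of its labels on the
moment curve `x ↦ (x, x², x³)`. Number the labels so that every vertex of degree three has two
consecutive labels: the labels of a vertex then form a block of at most two consecutive numbers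
together with one further number, and two vertices share at most one label. If a pair `b ≤ b'`,
say, of one vertex lies weakly to the left of all labels of the other, then `(X - y)² (X - b')`,
where `y` is the remaining label, separates the two label sets, touching zero only at common
labels; if the single `y` lies to the left, `(X - b) (X - b') (X - y)` does. Such polynomials are
the affine functions on the moment curve, so the triangles meet only at common corners.

The numbering is improved one vertex at a time. Since a label lies on only two triangles, of the
two positions next to a label of a vertex without consecutive labels at most one separates the
only consecutive labels of another vertex. Cutting at the harmless positions and rearranging the
pieces makes two labels of the vertex consecutive and spoils no other vertex.
-/

section ConvexHull

variable {𝕜 E : Type*} [Field 𝕜] [LinearOrder 𝕜] [IsStrictOrderedRing 𝕜] [AddCommGroup E]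
  [Module 𝕜 E] {s t r : Set E}

lemma convexHull_inter_convexHull_subset_of_affineMap (f : E →ᵃ[𝕜] 𝕜) (hs : ∀ z ∈ s, 0 ≤ f z)
    (ht : ∀ z ∈ t, f z ≤ 0) (hr : ∀ z ∈ s, f z = 0 → z ∈ r) :
    convexHull 𝕜 s ∩ convexHull 𝕜 t ⊆ convexHull 𝕜 r := by
  have hconv : Convex 𝕜 {z | 0 ≤ f z ∧ (f z = 0 → z ∈ convexHull 𝕜 r)} := by
    refine convex_iff_forall_pos.2 fun x hx y hy a b ha hb hab => ?_
    have hf : f (a • x + b • y) = a * f x + b * f y := Convex.combo_affine_apply hab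
    have hax := mul_nonneg ha.le hx.1
    have hby := mul_nonneg hb.le hy.1
    refine ⟨hf ▸ add_nonneg hax hby, fun h0 => ?_⟩
    rw [hf, add_eq_zero_iff_of_nonneg hax hby] at h0
    exact convex_convexHull 𝕜 r (hx.2 ((mul_eq_zero_iff_left ha.ne').1 h0.1))
      (hy.2 ((mul_eq_zero_iff_left hb.ne').1 h0.2)) ha.le hb.le hab
  rintro z ⟨hzs, hzt⟩
  have hsub : s ⊆ {z | 0 ≤ f z ∧ (f z = 0 → z ∈ convexHull 𝕜 r)} := fun z hz =>
    ⟨hs z hz, fun h => subset_convexHull 𝕜 r (hr z hz h)⟩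
  have hz := convexHull_min hsub hconv hzs
  exact hz.2 (le_antisymm (convexHull_min ht ((convex_Iic 0).affine_preimage f) hzt) hz.1)

end ConvexHull

section MomentCurve

open Polynomial Set

/-- The moment curve `x ↦ (x, x ^ 2, …, x ^ d)`, whose affine functions are the polynomials of
degree at most `d`. -/
def momentCurve (d : ℕ) (x : ℝ) : EuclideanSpace ℝ (Fin d) :=
  WithLp.toLp 2 fun i => x ^ (i + 1 : ℕ)

lemma exists_affineMap_momentCurve_eq_eval {d : ℕ} {p : ℝ[X]} (hp : p.natDegree ≤ d) :
    ∃ f : EuclideanSpace ℝ (Fin d) →ᵃ[ℝ] ℝ, ∀ x, f (momentCurve d x) = p.eval x := by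
  let g : EuclideanSpace ℝ (Fin d) →ₗ[ℝ] ℝ :=
    ∑ i : Fin d, p.coeff (i + 1) • (EuclideanSpace.proj i : _ →L[ℝ] ℝ).toLinearMap
  refine ⟨AffineMap.const ℝ _ (p.coeff 0) + g.toAffineMap, fun x => ?_⟩
  rw [eval_eq_sum_range' (Nat.lt_succ_of_le hp), Finset.sum_range_succ', add_comm,
    ← Fin.sum_univ_eq_sum_range (fun i => p.coeff (i + 1) * x ^ (i + 1))]
  simp [g, momentCurve]

variable {d : ℕ} {p : ℝ[X]} {A B : Set ℝ}

lemma convexHull_momentCurve_inter_subset (hp : p.natDegree ≤ d) (hA : ∀ x ∈ A, 0 ≤ p.eval x)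
    (hB : ∀ x ∈ B, p.eval x ≤ 0) (hAB : ∀ x ∈ A, p.eval x = 0 → x ∈ B) :
    convexHull ℝ (momentCurve d '' A) ∩ convexHull ℝ (momentCurve d '' B) ⊆
      convexHull ℝ (momentCurve d '' (A ∩ B)) := by
  obtain ⟨f, hf⟩ := exists_affineMap_momentCurve_eq_eval hp
  refine convexHull_inter_convexHull_subset_of_affineMap f ?_ ?_ ?_
  · simpa [hf] using hA
  · simpa [hf] using hB
  · rintro _ ⟨x, hx, rfl⟩ h0
    exact mem_image_of_mem _ ⟨hx, hAB x hx (by rwa [← hf])⟩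

lemma convexHull_momentCurve_three_inter_subset_of_le_point {b b' y : ℝ} (hb : b ≤ b')
    (hA : ∀ x ∈ A, x ∉ Ioo b b') (hy : ∀ x ∈ A, y ≤ x) :
    convexHull ℝ (momentCurve 3 '' A) ∩ convexHull ℝ (momentCurve 3 '' {b, b', y}) ⊆
      convexHull ℝ (momentCurve 3 '' (A ∩ {b, b', y})) := by
  refine convexHull_momentCurve_inter_subset (p := (X - C b) * (X - C b') * (X - C y))
    (by compute_degree) (fun x hx => ?_) ?_ fun x _ h => ?_
  · have hxb : 0 ≤ (x - b) * (x - b') := by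
      rcases le_or_gt x b with h | h
      · exact mul_nonneg_of_nonpos_of_nonpos (by linarith) (by linarith)
      · have h' : b' ≤ x := not_lt.1 fun h' => hA x hx ⟨h, h'⟩
        exact mul_nonneg (by linarith) (by linarith)
    simpa using mul_nonneg hxb (sub_nonneg.2 (hy x hx))
  · rintro x (rfl | rfl | rfl) <;> simp
  · simpa [sub_eq_zero, or_assoc] using h

lemma convexHull_momentCurve_three_inter_subset_of_le_pair {b b' y : ℝ} (hb : b ≤ b')
    (hA : ∀ x ∈ A, b' ≤ x) :
    convexHull ℝ (momentCurve 3 '' A) ∩ convexHull ℝ (momentCurve 3 '' {b, b', y}) ⊆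
      convexHull ℝ (momentCurve 3 '' (A ∩ {b, b', y})) := by
  refine convexHull_momentCurve_inter_subset (p := (X - C y) ^ 2 * (X - C b'))
    (by compute_degree) (fun x hx => ?_) ?_ fun x _ h => ?_
  · simpa using mul_nonneg (sq_nonneg (x - y)) (sub_nonneg.2 (hA x hx))
  · rintro x (rfl | rfl | rfl)
    · simpa using mul_nonpos_of_nonneg_of_nonpos (sq_nonneg (x - y)) (sub_nonpos.2 hb)
    all_goals simp
  · have hx : x = y ∨ x = b' := by simpa [sub_eq_zero] using h
    exact .inr hx.symm

lemma block_le_or_block_le {α : Type*} [LinearOrder α] {a a' x b b' y : α} (ha : a ≤ a')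
    (hb : b ≤ b') (hA : ∀ s ∈ ({a, a', x} : Set α), s ∉ Ioo b b')
    (hB : ∀ s ∈ ({b, b', y} : Set α), s ∉ Ioo a a')
    (hAB : (({a, a', x} : Set α) ∩ {b, b', y}).Subsingleton) :
    ((∀ s ∈ ({a, a', x} : Set α), y ≤ s) ∨ ∀ s ∈ ({a, a', x} : Set α), b' ≤ s) ∨
      (∀ s ∈ ({b, b', y} : Set α), x ≤ s) ∨ ∀ s ∈ ({b, b', y} : Set α), a' ≤ s := by
  by_contra! h
  obtain ⟨⟨⟨s₁, hs₁, hs₁y⟩, s₂, hs₂, hs₂b'⟩, ⟨t₁, ht₁, ht₁x⟩, t₂, ht₂, ht₂a'⟩ := h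
  have hs₂b : s₂ ≤ b := not_lt.1 fun h => hA s₂ hs₂ ⟨h, hs₂b'⟩
  have ht₂a : t₂ ≤ a := not_lt.1 fun h => hB t₂ ht₂ ⟨h, ht₂a'⟩
  have hax : a < x := by
    by_contra! hxa
    have hxA : ∀ s ∈ ({a, a', x} : Set α), x ≤ s := by simp [hxa, hxa.trans ha]
    have hxs₁ := hxA s₁ hs₁
    have hxs₂ := hxA s₂ hs₂
    rcases ht₁ with rfl | rfl | rfl <;> order
  have hby : b < y := by
    by_contra! hyb
    have hyB : ∀ s ∈ ({b, b', y} : Set α), y ≤ s := by simp [hyb, hyb.trans hb]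
    have hyt₁ := hyB t₁ ht₁
    have hyt₂ := hyB t₂ ht₂
    rcases hs₁ with rfl | rfl | rfl <;> order
  have has₂ : a ≤ s₂ := by rcases hs₂ with rfl | rfl | rfl <;> order
  have hbt₂ : b ≤ t₂ := by rcases ht₂ with rfl | rfl | rfl <;> order
  obtain rfl : a = b := by order
  have hb'a' : b' ≤ a' := not_lt.1 fun h => hA a' (by simp) ⟨by order, h⟩
  have ha'b' : a' ≤ b' := not_lt.1 fun h => hB b' (by simp) ⟨by order, h⟩
  have haa' : a = a' := hAB (by simp) (by simp [ha'b'.antisymm hb'a'])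
  order

theorem convexHull_momentCurve_three_inter {a a' x b b' y : ℝ} (ha : a ≤ a') (hb : b ≤ b')
    (hA : ∀ s ∈ ({a, a', x} : Set ℝ), s ∉ Ioo b b') (hB : ∀ s ∈ ({b, b', y} : Set ℝ), s ∉ Ioo a a')
    (hAB : (({a, a', x} : Set ℝ) ∩ {b, b', y}).Subsingleton) :
    convexHull ℝ (momentCurve 3 '' {a, a', x}) ∩ convexHull ℝ (momentCurve 3 '' {b, b', y}) =
      momentCurve 3 '' ({a, a', x} ∩ {b, b', y}) := by
  refine (Subset.antisymm (subset_inter ?_ ?_) ?_).symm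
  · exact (image_mono inter_subset_left).trans (subset_convexHull ℝ _)
  · exact (image_mono inter_subset_right).trans (subset_convexHull ℝ _)
  have hconv : Convex ℝ (momentCurve 3 '' ({a, a', x} ∩ {b, b', y})) := (hAB.image _).convex
  rw [← hconv.convexHull_eq]
  rcases block_le_or_block_le ha hb hA hB hAB with (h | h) | (h | h)
  · exact convexHull_momentCurve_three_inter_subset_of_le_point hb hA h
  · exact convexHull_momentCurve_three_inter_subset_of_le_pair hb h
  · rw [inter_comm, inter_comm {a, a', x}]
    exact convexHull_momentCurve_three_inter_subset_of_le_point ha hB h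
  · rw [inter_comm, inter_comm {a, a', x}]
    exact convexHull_momentCurve_three_inter_subset_of_le_pair ha h

end MomentCurve

section Numbering

open Finset

variable {V E : Type*}

/-- No two consecutive entries of `l` both lie in `s`. -/
def IsScattered (s : Finset E) (l : List E) : Prop :=
  l.IsChain fun e f => ¬ (e ∈ s ∧ f ∈ s)

lemma isScattered_reverse {s : Finset E} {l : List E} :
    IsScattered s l.reverse ↔ IsScattered s l := by
  simp only [IsScattered, List.isChain_reverse, and_comm]

lemma isScattered_append {s : Finset E} {k l : List E} :
    IsScattered s (k ++ l) ↔ IsScattered s k ∧ IsScattered s l ∧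
      ∀ e ∈ k.getLast?, ∀ f ∈ l.head?, ¬ (e ∈ s ∧ f ∈ s) :=
  List.isChain_append

lemma exists_getElem_succ_of_not_isScattered {s : Finset E} {l : List E} (h : ¬ IsScattered s l) :
    ∃ (i : ℕ) (hi : i + 1 < l.length), l[i] ∈ s ∧ l[i + 1] ∈ s := by
  obtain ⟨i, hi, h⟩ := List.exists_not_getElem_of_not_isChain h
  exact ⟨i, hi, not_not.1 h⟩

/-- The list `k ++ l` may be cut between `k` and `l`: every `t w` with two consecutive entries in
`k ++ l` has two consecutive entries in `k` or in `l` already. -/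
def IsSafeCut (t : V → Finset E) (k l : List E) : Prop :=
  ∀ w, IsScattered (t w) k → IsScattered (t w) l → IsScattered (t w) (k ++ l)

variable {t : V → Finset E}

lemma isSafeCut_or_isSafeCut (ht : ∀ e, {v | e ∈ t v}.encard ≤ 2) {v : V} {e : E} {k l : List E}
    (he : e ∈ t v) (hv : IsScattered (t v) (k ++ e :: l)) :
    IsSafeCut t k (e :: l) ∨ IsSafeCut t (k ++ [e]) l := by
  by_contra! h
  simp only [IsSafeCut, not_forall] at h
  obtain ⟨⟨w, hwk, hwl, hw⟩, u, huk, hul, hu⟩ := h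
  have hew : e ∈ t w := by
    by_contra hew
    exact hw (isScattered_append.2 ⟨hwk, hwl, by simp [hew]⟩)
  have heu : e ∈ t u := by
    by_contra heu
    exact hu (isScattered_append.2 ⟨huk, hul, by simp [heu]⟩)
  have hu' : ¬ IsScattered (t u) (e :: l) := fun h =>
    hu (isScattered_append.2 ⟨huk, hul, by
      simpa using (isScattered_append (k := [e]).1 h).2.2⟩)
  have hvu : v ≠ u := by
    rintro rfl
    exact hu (by simpa using hv)
  have hvw : v ≠ w := by
    rintro rfl
    exact hw hv
  have huw : u ≠ w := by
    rintro rfl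
    exact hu' hwl
  have h3 : ({v, u, w} : Set V).encard ≤ 2 :=
    (Set.encard_le_encard (by simp [Set.insert_subset_iff, he, heu, hew])).trans (ht e)
  rw [Set.encard_eq_three.2 ⟨v, u, w, hvu, hvw, huw, rfl⟩] at h3
  exact absurd h3 (by decide)

lemma exists_perm_append_not_isScattered (ht : ∀ e, {v | e ∈ t v}.encard ≤ 2) {v : V} {e f : E}
    {k l : List E} (he : e ∈ t v) (hf : f ∈ t v) (hfl : f ∈ l) (hl : IsScattered (t v) l) :
    ∃ m, m.Perm (k ++ [e] ++ l) ∧ ¬ IsScattered (t v) m ∧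
      ∀ w, IsScattered (t w) m → IsScattered (t w) (k ++ [e]) ∧ IsScattered (t w) l := by
  obtain ⟨p, q, rfl⟩ := List.append_of_mem hfl
  have hpair (r : List E) : ¬ IsScattered (t v) (k ++ [e] ++ f :: r) := fun h =>
    (isScattered_append.1 h).2.2 e (by simp) f (by simp) ⟨he, hf⟩
  rcases isSafeCut_or_isSafeCut ht hf hl with h | h
  · exact ⟨k ++ [e] ++ (f :: q ++ p), List.perm_append_comm.append_left _, hpair _,
      fun w hw => ⟨hw.left_of_append, h w hw.right_of_append.right_of_append
        hw.right_of_append.left_of_append⟩⟩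
  · refine ⟨k ++ [e] ++ ((p ++ [f]).reverse ++ q), ?_, ?_, fun w hw => ?_⟩
    · simpa using ((List.reverse_perm (p ++ [f])).append_right q).append_left (k ++ [e])
    · simpa using hpair (p.reverse ++ q)
    · refine ⟨hw.left_of_append, ?_⟩
      simpa using h w (isScattered_reverse.1 hw.right_of_append.left_of_append)
        hw.right_of_append.right_of_append

lemma exists_perm_not_isScattered (ht : ∀ e, {v | e ∈ t v}.encard ≤ 2) {v : V}
    {e f g : E} {k l : List E} (he : e ∈ t v) (hf : f ∈ t v) (hg : g ∈ t v) {r : List E}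
    (hgr : g ∈ r) (hv : IsScattered (t v) (k ++ e :: (l ++ f :: r))) :
    ∃ m, m.Perm (k ++ e :: (l ++ f :: r)) ∧ ¬ IsScattered (t v) m ∧
      ∀ w, IsScattered (t w) m → IsScattered (t w) (k ++ e :: (l ++ f :: r)) := by
  have hlr : IsScattered (t v) (e :: l ++ f :: r) := hv.right_of_append
  rcases isSafeCut_or_isSafeCut ht he hv with h | h
  · suffices ∃ m, m.Perm (e :: l ++ f :: r) ∧ ¬ IsScattered (t v) m ∧
        ∀ w, IsScattered (t w) m → IsScattered (t w) (e :: l ++ f :: r) by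
      obtain ⟨m, hm, hvm, hw⟩ := this
      exact ⟨k ++ m, hm.append_left k, fun hkm => hvm hkm.right_of_append,
        fun w hkm => h w hkm.left_of_append (hw w hkm.right_of_append)⟩
    rcases isSafeCut_or_isSafeCut ht hf hlr with h' | h'
    · obtain ⟨m, hm, hvm, hw⟩ := exists_perm_append_not_isScattered ht (k := l.reverse) he hf
        (List.mem_cons_self ..) hlr.right_of_append
      -- Reversing `e :: l` has brought `e` next to the part that holds `f`.
      refine ⟨m, hm.trans ?_, hvm, fun w hwm => h' w ?_ (hw w hwm).2⟩
      · simpa using (List.reverse_perm (e :: l)).append_right (f :: r)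
      · simpa using isScattered_reverse.2 (hw w hwm).1
    · obtain ⟨m, hm, hvm, hw⟩ := exists_perm_append_not_isScattered ht (k := e :: l) hf hg hgr
        hlr.right_of_append.tail
      exact ⟨m, by simpa using hm, hvm, fun w hwm =>
        by simpa using h' w (hw w hwm).1 (hw w hwm).2⟩
  · obtain ⟨m, hm, hvm, hw⟩ := exists_perm_append_not_isScattered ht (k := k) he hf
      (l := l ++ f :: r) (by simp) hlr.tail
    exact ⟨m, by simpa using hm, hvm, fun w hwm =>
      by simpa using h w (hw w hwm).1 (hw w hwm).2⟩

lemma exists_eq_append_of_three_le_card {s : Finset E} {l : List E}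
    (hs : 3 ≤ #s) (hl : ∀ e ∈ s, e ∈ l) :
    ∃ e ∈ s, ∃ f ∈ s, ∃ g ∈ s, ∃ k m r, g ∈ r ∧ l = k ++ e :: (m ++ f :: r) := by
  classical
  have hlen : 3 ≤ (l.filter (· ∈ s)).length := by
    refine hs.trans (le_trans (card_le_card fun e he => ?_) (List.toFinset_card_le _))
    simpa using ⟨hl e he, he⟩
  match h : l.filter (· ∈ s), hlen with
  | e :: f :: g :: q, _ =>
    obtain ⟨k, l', rfl, -, he, h'⟩ := List.filter_eq_cons_iff.1 h
    obtain ⟨m, r, rfl, -, hf, hr⟩ := List.filter_eq_cons_iff.1 h'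
    have hg : g ∈ r.filter (· ∈ s) := by simp [hr]
    simp only [List.mem_filter, decide_eq_true_eq] at he hf hg
    exact ⟨e, he, f, hf, g, hg.2, k, m, r, hg.1, rfl⟩

lemma exists_nodup_not_isScattered [Finite E] (ht : ∀ e, {v | e ∈ t v}.encard ≤ 2)
    (s : Finset V) :
    ∃ l : List E, l.Nodup ∧ (∀ e, e ∈ l) ∧ ∀ v ∈ s, 3 ≤ #(t v) → ¬ IsScattered (t v) l := by
  classical
  have := Fintype.ofFinite E
  induction s using Finset.induction_on with
  | empty => exact ⟨univ.toList, nodup_toList _, by simp, by simp⟩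
  | insert v s _ ih =>
    obtain ⟨l, hl, hmem, hs⟩ := ih
    by_cases hv : 3 ≤ #(t v) ∧ IsScattered (t v) l
    · obtain ⟨e, he, f, hf, g, hg, k, l', r, hgr, rfl⟩ :=
        exists_eq_append_of_three_le_card hv.1 fun e _ => hmem e
      obtain ⟨m, hm, hvm, hw⟩ := exists_perm_not_isScattered ht he hf hg hgr hv.2
      exact ⟨m, hm.nodup_iff.2 hl, fun e => hm.mem_iff.2 (hmem e),
        forall_mem_insert _ _ _ |>.2 ⟨fun _ => hvm, fun w hws h3 hwm => hs w hws h3 (hw w hwm)⟩⟩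
    · exact ⟨l, hl, hmem, forall_mem_insert _ _ _ |>.2 ⟨fun h3 h => hv ⟨h3, h⟩, hs⟩⟩

theorem exists_numbering_consecutive [Finite V] [Finite E]
    (ht : ∀ e, {v | e ∈ t v}.encard ≤ 2) :
    ∃ pos : E → ℕ, pos.Injective ∧
      ∀ v, 3 ≤ #(t v) → ∃ e ∈ t v, ∃ f ∈ t v, pos f = pos e + 1 := by
  classical
  have := Fintype.ofFinite V
  obtain ⟨l, hl, hmem, hv⟩ := exists_nodup_not_isScattered ht univ
  refine ⟨l.idxOf, fun e f h => (List.idxOf_inj (hmem e)).1 h, fun v h3 => ?_⟩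
  obtain ⟨i, hi, h, h'⟩ := exists_getElem_succ_of_not_isScattered (hv v (mem_univ v) h3)
  refine ⟨l[i], h, l[i + 1], h', ?_⟩
  simp only [hl.idxOf_getElem]

end Numbering

section Placement

open Finset Set

variable {V E : Type*}

lemma exists_eq_triple_of_card_le_three {s : Finset E} {pos : E → ℕ} (hne : s.Nonempty)
    (hs : #s ≤ 3) (h : 3 ≤ #s → ∃ e ∈ s, ∃ f ∈ s, pos f = pos e + 1) :
    ∃ e f g, (s : Set E) = {e, f, g} ∧ pos e ≤ pos f ∧ pos f ≤ pos e + 1 := by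
  classical
  have hpos := hne.card_pos
  interval_cases hcard : #s
  · obtain ⟨e, rfl⟩ := card_eq_one.1 hcard
    exact ⟨e, e, e, by simp, le_rfl, Nat.le_succ _⟩
  · obtain ⟨e, f, -, rfl⟩ := card_eq_two.1 hcard
    exact ⟨e, e, f, by simp, le_rfl, Nat.le_succ _⟩
  · obtain ⟨e, he, f, hf, hef⟩ := h le_rfl
    have hne : e ≠ f := by
      rintro rfl
      omega
    have hsub : {e, f} ⊆ s := by simp [Finset.insert_subset_iff, he, hf]
    obtain ⟨g, hg⟩ : ∃ g, s \ {e, f} = {g} := by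
      rw [← card_eq_one, card_sdiff_of_subset hsub, hcard, card_pair hne]
    refine ⟨e, f, g, ?_, hef ▸ Nat.le_succ _, hef.le⟩
    rw [← union_sdiff_of_subset hsub, hg]
    simp

theorem exists_forall_convexHull_image_inter_eq [Finite V] [Finite E] {t : V → Finset E}
    (hcard : ∀ v, #(t v) ≤ 3) (ht : ∀ e, {v | e ∈ t v}.encard ≤ 2)
    (hinter : ∀ u v, u ≠ v → (t u ∩ t v : Set E).Subsingleton) :
    ∃ γ : E → EuclideanSpace ℝ (Fin 3), ∀ u v, u ≠ v →
      convexHull ℝ (γ '' t u) ∩ convexHull ℝ (γ '' t v) = γ '' (t u ∩ t v) := by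
  obtain ⟨pos, hpos, hpair⟩ := exists_numbering_consecutive ht
  let p : E → ℝ := fun e => pos e
  have hp : p.Injective := Nat.cast_injective.comp hpos
  refine ⟨momentCurve 3 ∘ p, fun u v huv => ?_⟩
  rcases (t u).eq_empty_or_nonempty with hu | hu
  · simp [hu]
  rcases (t v).eq_empty_or_nonempty with hv | hv
  · simp [hv]
  have himage (e f g : E) : p '' {e, f, g} = {p e, p f, p g} := by rw [image_insert_eq, image_pair]
  have hgap (e f : E) (hef : pos f ≤ pos e + 1) (s : Set E) :
      ∀ x ∈ p '' s, x ∉ Ioo (p e) (p f) := by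
    rintro _ ⟨g, -, rfl⟩ ⟨heg, hgf⟩
    have heg' : pos e < pos g := Nat.cast_lt.1 heg
    have hgf' : pos g < pos f := Nat.cast_lt.1 hgf
    omega
  have hsub := (hinter u v huv).image p
  obtain ⟨a, a', x, hu, ha, ha'⟩ := exists_eq_triple_of_card_le_three hu (hcard u) (hpair u)
  obtain ⟨b, b', y, hv, hb, hb'⟩ := exists_eq_triple_of_card_le_three hv (hcard v) (hpair v)
  have hA := hgap b b' hb' {a, a', x}
  have hB := hgap a a' ha' {b, b', y}
  rw [hu, hv, image_inter hp] at hsub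
  rw [himage] at hA hB
  rw [himage, himage] at hsub
  rw [hu, hv, image_comp, image_comp, image_comp, image_inter hp, himage, himage]
  exact convexHull_momentCurve_three_inter (Nat.cast_le.2 ha) (Nat.cast_le.2 hb) hA hB hsub

end Placement

section Corners

open Finset Set

variable {V : Type*}

open Classical in
/-- The labels of the corners of the triangle of the vertex `v`: the edges at `v`. An isolated
vertex gets the loop `s(v, v)` instead, so that its triangle is a point and not empty. -/
noncomputable def cornerLabels [Fintype V] (G : SimpleGraph V) (v : V) : Finset (Sym2 V) :=
  if (G.incidenceFinset v).Nonempty then G.incidenceFinset v else {s(v, v)}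

variable [Fintype V] {G : SimpleGraph V} {u v : V} {e : Sym2 V}

lemma cornerLabels_nonempty : (cornerLabels G v).Nonempty := by
  unfold cornerLabels
  split_ifs with h
  · exact h
  · exact singleton_nonempty _

lemma mem_of_mem_cornerLabels (h : e ∈ cornerLabels G v) : v ∈ e := by
  classical
  unfold cornerLabels at h
  split_ifs at h
  · exact ((G.mem_incidenceFinset v e).1 h).2
  · simp [Finset.mem_singleton.1 h]

lemma card_cornerLabels_le {k : ℕ} (hk : 1 ≤ k) (h : (G.neighborSet v).ncard ≤ k) :
    #(cornerLabels G v) ≤ k := by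
  classical
  unfold cornerLabels
  split_ifs
  · rwa [G.card_incidenceFinset_eq_degree, ← G.card_neighborSet_eq_degree,
      ← Nat.card_eq_fintype_card, Nat.card_coe_set_eq]
  · rwa [Finset.card_singleton]

lemma encard_setOf_mem_cornerLabels_le_two (e : Sym2 V) :
    {v | e ∈ cornerLabels G v}.encard ≤ 2 := by
  induction e with
  | h x y =>
    have hsub : {v | s(x, y) ∈ cornerLabels G v} ⊆ {x, y} := fun v hv =>
      Sym2.mem_iff.1 (mem_of_mem_cornerLabels hv)
    exact (encard_le_encard hsub).trans
      ((encard_insert_le {y} x).trans (by rw [encard_singleton, one_add_one_eq_two]))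

lemma mk_mem_cornerLabels_iff (huv : u ≠ v) : s(u, v) ∈ cornerLabels G u ↔ G.Adj u v := by
  classical
  unfold cornerLabels
  split_ifs with h
  · simp
  · have hu : s(u, v) ∉ G.incidenceFinset u := fun he => h ⟨_, he⟩
    simpa [huv.symm] using hu

lemma mem_cornerLabels_and_mem_iff (huv : u ≠ v) :
    e ∈ cornerLabels G u ∧ e ∈ cornerLabels G v ↔ e = s(u, v) ∧ G.Adj u v := by
  constructor
  · rintro ⟨hu, hv⟩
    obtain rfl := (Sym2.mem_and_mem_iff huv).1
      ⟨mem_of_mem_cornerLabels hu, mem_of_mem_cornerLabels hv⟩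
    exact ⟨rfl, (mk_mem_cornerLabels_iff huv).1 hu⟩
  · rintro ⟨rfl, h⟩
    exact ⟨(mk_mem_cornerLabels_iff huv).2 h,
      Sym2.eq_swap ▸ (mk_mem_cornerLabels_iff huv.symm).2 h.symm⟩

theorem stmt19_general {V : Type*} [Finite V] (G : SimpleGraph V)
    (hdeg : ∀ v, (G.neighborSet v).ncard ≤ 3) :
    ∃ pts : V → Finset (EuclideanSpace ℝ (Fin 3)),
      (∀ i, (pts i).Nonempty ∧ #(pts i) ≤ 3) ∧
      ∀ i j, i ≠ j →
        ((convexHull ℝ (pts i : Set (EuclideanSpace ℝ (Fin 3))) ∩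
            convexHull ℝ (pts j : Set (EuclideanSpace ℝ (Fin 3)))).Nonempty ↔ G.Adj i j) ∧
        convexHull ℝ (pts i : Set (EuclideanSpace ℝ (Fin 3))) ∩
            convexHull ℝ (pts j : Set (EuclideanSpace ℝ (Fin 3))) ⊆ pts i ∩ pts j := by
  classical
  have := Fintype.ofFinite V
  have hcard (v : V) : #(cornerLabels G v) ≤ 3 := card_cornerLabels_le (by decide) (hdeg v)
  obtain ⟨γ, hγ⟩ := exists_forall_convexHull_image_inter_eq hcard
    encard_setOf_mem_cornerLabels_le_two
    fun u v huv e he f hf => ((mem_cornerLabels_and_mem_iff huv).1 he).1.trans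
      ((mem_cornerLabels_and_mem_iff huv).1 hf).1.symm
  refine ⟨fun v => (cornerLabels G v).image γ,
    fun v => ⟨cornerLabels_nonempty.image γ, card_image_le.trans (hcard v)⟩, fun u v huv => ?_⟩
  rw [coe_image, coe_image, hγ u v huv]
  refine ⟨?_, image_inter_subset γ _ _⟩
  simp [Set.Nonempty, mem_cornerLabels_and_mem_iff huv]

end Corners

/-- every finite simple graph of maximum degree at most `3` is the
intersection graph of (possibly degenerate) triangles in `ℝ³` that are pairwise disjoint
except possibly at shared corner points. -/
theorem stmt19 (n : ℕ) (G : SimpleGraph (Fin n))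
    (hdeg : ∀ v : Fin n, ({u : Fin n | G.Adj v u}).ncard ≤ 3) :
    ∃ pts : Fin n → Finset (EuclideanSpace ℝ (Fin 3)),
      (∀ i, (pts i).card ≤ 3) ∧
      ∀ i j : Fin n, i ≠ j →
        (((convexHull ℝ (↑(pts i) : Set (EuclideanSpace ℝ (Fin 3)))) ∩
            (convexHull ℝ (↑(pts j) : Set (EuclideanSpace ℝ (Fin 3))))).Nonempty
          ↔ G.Adj i j) ∧
        ((convexHull ℝ (↑(pts i) : Set (EuclideanSpace ℝ (Fin 3)))) ∩
            (convexHull ℝ (↑(pts j) : Set (EuclideanSpace ℝ (Fin 3))))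
          ⊆ (↑(pts i) : Set (EuclideanSpace ℝ (Fin 3))) ∩
            (↑(pts j) : Set (EuclideanSpace ℝ (Fin 3)))) := by
  obtain ⟨pts, hpts, h⟩ := stmt19_general G hdeg
  exact ⟨pts, fun i => (hpts i).2, h⟩
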